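/- For all integers n ≥ 2 and d ≥ 2, after n^(3d+12) balls have been placed under UNFAIR with n bins and d choices, with probability at least 1 − O(n^(−d−1)) the following holds: for every pair of distinct bins B_i, B_j there was some time s ≤ n^(3d+12) at which the absolute difference between the load of B_i and the load of B_j was at least n². -/

import Mathlib

namespace Unfair

/-- Loads of the `n` bins, starting from `init`, after the balls recorded in `l`
have been placed (each entry of `l` is the bin that received a ball). -/
def loadsOf (n : ℕ) (init : Fin n → ℕ) (l : List (Fin n)) : Fin n → ℕ :=
  fun b => init b + l.count b

/-- One step of UNFAIR: draw `d` options uniformly from `{1,…,n}^d` (with replacement)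
and return the most-loaded option bin, ties broken uniformly at random. -/
noncomputable def stepBin (n d : ℕ) (hn : 0 < n) (hd : 0 < d) (L : Fin n → ℕ) :
    PMF (Fin n) :=
  haveI : NeZero n := ⟨hn.ne'⟩
  haveI : NeZero d := ⟨hd.ne'⟩
  (PMF.uniformOfFintype (Fin d → Fin n)).bind fun opts =>
    PMF.uniformOfFinset
      ((Finset.univ.image opts).filter fun b => ∀ k, L (opts k) ≤ L b)
      (by
        classical
        obtain ⟨b, hb, hmax⟩ := Finset.exists_max_image (Finset.univ.image opts) L
          (Finset.univ_nonempty.image opts)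
        exact ⟨b, Finset.mem_filter.2 ⟨hb, fun k =>
          hmax _ (Finset.mem_image_of_mem _ (Finset.mem_univ k))⟩⟩)

/-- The permutations of `Fin n` that sort the loads `L`: `σ` maps rank (0-indexed,
least-loaded first) to bin, so `L ∘ σ` is monotone. -/
noncomputable def compatPerms (n : ℕ) (L : Fin n → ℕ) : Finset (Equiv.Perm (Fin n)) :=
  @Finset.filter _ (fun σ => Monotone fun i => L (σ i)) (Classical.decPred _) Finset.univ

/-- A uniformly random ranking of the bins by load, ties broken uniformly at random:
a uniform element of the sorting permutations of `L`. -/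
noncomputable def rankPMF (n : ℕ) (L : Fin n → ℕ) : PMF (Equiv.Perm (Fin n)) :=
  PMF.uniformOfFinset (compatPerms n L)
    ⟨Tuple.sort L, by
      simp only [compatPerms, Finset.mem_filter, Finset.mem_univ, true_and]
      exact Tuple.monotone_sort L⟩

/-- The UNFAIR process, run for `m` steps from initial loads `init`.  The outcome is the
history: at each step we record the bin that received the ball together with a uniformly
random load-ranking of the bins (ties broken uniformly at random) just after that step. -/
noncomputable def proc (n d : ℕ) (hn : 0 < n) (hd : 0 < d) (init : Fin n → ℕ) :
    ℕ → PMF (List (Fin n × Equiv.Perm (Fin n)))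
  | 0 => PMF.pure []
  | (m + 1) => (proc n d hn hd init m).bind fun hist =>
      (stepBin n d hn hd (loadsOf n init (hist.map Prod.fst))).bind fun b =>
        (rankPMF n (loadsOf n init (hist.map Prod.fst ++ [b]))).bind fun σ =>
          PMF.pure (hist ++ [(b, σ)])

/-- The loads at time `t` along a history `h`. -/
def trajLoads (n : ℕ) (init : Fin n → ℕ) (h : List (Fin n × Equiv.Perm (Fin n)))
    (t : ℕ) : Fin n → ℕ :=
  loadsOf n init ((h.map Prod.fst).take t)

/-- The ranking permutation at time `s ≥ 1` along a history `h`
(maps rank, 0-indexed least-loaded first, to bin). -/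
def trajRank (n : ℕ) (h : List (Fin n × Equiv.Perm (Fin n))) (s : ℕ) :
    Equiv.Perm (Fin n) :=
  (h.map Prod.snd).getD (s - 1) 1

/-- The load of the `i`-th least-loaded bin (0-indexed) for loads `L`. -/
noncomputable def sortedLoad (n : ℕ) (L : Fin n → ℕ) (i : Fin n) : ℕ :=
  L (Tuple.sort L i)

/-- Expectation of `f` under the distribution `p`. -/
noncomputable def pexp {α : Type*} (p : PMF α) (f : α → ℝ) : ℝ :=
  ∑' a, (p a).toReal * f a

/-- Probability of the event `S` under the distribution `p`, as a real number. -/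
noncomputable def prob {α : Type*} (p : PMF α) (S : Set α) : ℝ :=
  (p.toOuterMeasure S).toReal

end Unfair

/-!
Fix two bins and let `D` be the difference of their loads. A step chooses the more loaded of the
two at least as often as the other and each of them with probability at least `c = n⁻ᵈ`, so the
expectation of `D ^ 2` grows by at least `c`. Hence `g ^ 2 - D ^ 2 + c * t`, killed when `|D|` first
reaches `g`, is a nonnegative supermartingale, which starts at `g ^ 2` or less; as it is at least
`c * m` on the event that the pair has survived `m` steps, this event has probability at most
`g ^ 2 / (c * m)`. A union bound over the pairs of bins finishes the proof.
-/

namespace Unfair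

open scoped ENNReal NNReal

section Expectation

variable {α β : Type*}

/-- Expectation of an extended nonnegative function, for which, unlike for `pexp`, no summability
has to be checked. -/
noncomputable def lexp (p : PMF α) (f : α → ℝ≥0∞) : ℝ≥0∞ :=
  ∑' a, p a * f a

lemma lexp_mono (p : PMF α) {f g : α → ℝ≥0∞} (hfg : ∀ a, f a ≤ g a) : lexp p f ≤ lexp p g :=
  ENNReal.tsum_le_tsum fun a => mul_le_mul_right (hfg a) (p a)

lemma lexp_const_mul (p : PMF α) (c : ℝ≥0∞) (f : α → ℝ≥0∞) :
    lexp p (fun a => c * f a) = c * lexp p f := by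
  simp only [lexp, mul_left_comm _ c, ENNReal.tsum_mul_left]

lemma lexp_pure (a : α) (f : α → ℝ≥0∞) : lexp (PMF.pure a) f = f a := by
  classical
  rw [lexp, tsum_eq_single a fun b hb => by simp [hb]]
  simp

lemma lexp_bind (p : PMF α) (q : α → PMF β) (f : β → ℝ≥0∞) :
    lexp (p.bind q) f = lexp p fun a => lexp (q a) f := by
  simp only [lexp, PMF.bind_apply, ← ENNReal.tsum_mul_right, ← ENNReal.tsum_mul_left, mul_assoc]
  exact ENNReal.tsum_comm

lemma lexp_map (p : PMF α) (u : α → β) (f : β → ℝ≥0∞) :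
    lexp (p.map u) f = lexp p (f ∘ u) := by
  simp only [PMF.map, lexp_bind, Function.comp_def, lexp_pure]

lemma lexp_indicator_one (p : PMF α) (S : Set α) :
    lexp p (S.indicator 1) = p.toOuterMeasure S := by
  rw [PMF.toOuterMeasure_apply, lexp]
  exact tsum_congr fun a => by by_cases ha : a ∈ S <;> simp [ha]

lemma lexp_ofReal [Finite α] (p : PMF α) {f : α → ℝ} (hf : ∀ a, 0 ≤ f a) :
    lexp p (fun a => ENNReal.ofReal (f a)) = ENNReal.ofReal (pexp p f) := by
  have := Fintype.ofFinite α
  rw [lexp, pexp, tsum_fintype, tsum_fintype,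
    ENNReal.ofReal_sum_of_nonneg fun a _ => mul_nonneg ENNReal.toReal_nonneg (hf a)]
  refine Finset.sum_congr rfl fun a _ => ?_
  rw [ENNReal.ofReal_mul ENNReal.toReal_nonneg, ENNReal.ofReal_toReal (p.apply_ne_top a)]

lemma sum_toReal_eq_one [Fintype α] (p : PMF α) : ∑ a, (p a).toReal = 1 := by
  rw [← ENNReal.toReal_sum fun a _ => p.apply_ne_top a, ← tsum_fintype (L := .unconditional _),
    p.tsum_coe, ENNReal.toReal_one]

lemma pexp_const_sub [Finite α] (p : PMF α) (x : ℝ) (f : α → ℝ) :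
    pexp p (fun a => x - f a) = x - pexp p f := by
  have := Fintype.ofFinite α
  simp only [pexp, tsum_fintype, mul_sub, Finset.sum_sub_distrib, ← Finset.sum_mul,
    sum_toReal_eq_one, one_mul]

lemma pexp_sq_add_ite_sub_ite [Finite α] [DecidableEq α] (p : PMF α) {i j : α} (hij : i ≠ j)
    (x : ℝ) :
    pexp p (fun b => (x + (if b = i then 1 else 0) - (if b = j then 1 else 0)) ^ 2) =
      x ^ 2 + 2 * x * ((p i).toReal - (p j).toReal) + ((p i).toReal + (p j).toReal) := by
  have := Fintype.ofFinite α
  have hexpand (b : α) : (x + (if b = i then 1 else 0) - (if b = j then 1 else 0)) ^ 2 =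
      x ^ 2 + (if b = i then 2 * x + 1 else 0) + (if b = j then 1 - 2 * x else 0) := by
    split_ifs with hi hj
    · exact absurd (hi.symm.trans hj) hij
    all_goals ring
  simp only [pexp, tsum_fintype, hexpand, mul_add, Finset.sum_add_distrib, ← Finset.sum_mul,
    sum_toReal_eq_one, mul_ite, mul_zero, Finset.sum_ite_eq', Finset.mem_univ, if_true]
  ring

lemma toOuterMeasure_le_one (p : PMF α) (S : Set α) : p.toOuterMeasure S ≤ 1 :=
  (MeasureTheory.measure_mono S.subset_univ).trans_eq
    ((p.toOuterMeasure_apply_eq_one_iff _).2 p.support.subset_univ)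

lemma toOuterMeasure_ne_top (p : PMF α) (S : Set α) : p.toOuterMeasure S ≠ ∞ :=
  ne_top_of_le_ne_top ENNReal.one_ne_top (toOuterMeasure_le_one p S)

lemma prob_map (p : PMF α) (u : α → β) (S : Set β) : prob (p.map u) S = prob p (u ⁻¹' S) := by
  rw [prob, prob, PMF.toOuterMeasure_map_apply]

lemma one_sub_sum_prob_le_prob {ι : Type*} (p : PMF α) (S : Set α) (T : Finset ι) (B : ι → Set α)
    (hcover : p.support ⊆ S ∪ ⋃ k ∈ T, B k) : 1 - ∑ k ∈ T, prob p (B k) ≤ prob p S := by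
  have hunion : 1 ≤ p.toOuterMeasure S + ∑ k ∈ T, p.toOuterMeasure (B k) :=
    calc 1 = p.toOuterMeasure (S ∪ ⋃ k ∈ T, B k) :=
          ((p.toOuterMeasure_apply_eq_one_iff _).2 hcover).symm
      _ ≤ p.toOuterMeasure S + p.toOuterMeasure (⋃ k ∈ T, B k) :=
          MeasureTheory.measure_union_le _ _
      _ ≤ _ := by gcongr; exact MeasureTheory.measure_biUnion_finset_le _ _
  have hsum : ∑ k ∈ T, p.toOuterMeasure (B k) ≠ ∞ :=
    ENNReal.sum_ne_top.2 fun k _ => toOuterMeasure_ne_top p (B k)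
  have hreal := ENNReal.toReal_mono (ENNReal.add_ne_top.2 ⟨toOuterMeasure_ne_top p S, hsum⟩) hunion
  rw [ENNReal.toReal_add (toOuterMeasure_ne_top p S) hsum,
    ENNReal.toReal_sum fun k _ => toOuterMeasure_ne_top p (B k), ENNReal.toReal_one] at hreal
  exact sub_le_iff_le_add.2 hreal

end Expectation

section Allocation

variable {n : ℕ}

/-- Law of the list of bins receiving the first `m` balls, when `q L` is the law of the bin chosen
at loads `L` and the initial loads are `init`. For `q = stepBin n d hn hd` this is `proc` without
the rankings. -/
noncomputable def allocation (q : (Fin n → ℕ) → PMF (Fin n)) (init : Fin n → ℕ) :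
    ℕ → PMF (List (Fin n))
  | 0 => PMF.pure []
  | m + 1 => (allocation q init m).bind fun l => (q (loadsOf n init l)).map fun b => l ++ [b]

/-- Signed load difference of the bins `i` and `j` after the balls recorded in `l`. -/
def loadDiff (init : Fin n → ℕ) (i j : Fin n) (l : List (Fin n)) : ℤ :=
  loadsOf n init l i - loadsOf n init l j

/-- The event that the load gap of the bins `i` and `j` has been less than `g` at all times. It is
phrased through prefixes of the list of bins rather than through times, so that the length of the
list does not enter. -/
def gapStaysBelow (init : Fin n → ℕ) (g : ℤ) (i j : Fin n) : Set (List (Fin n)) :=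
  {l | ∀ k, k <+: l → |loadDiff init i j k| < g}

lemma loadDiff_concat (init : Fin n → ℕ) (i j : Fin n) (l : List (Fin n)) (b : Fin n) :
    loadDiff init i j (l ++ [b]) =
      loadDiff init i j l + (if b = i then 1 else 0) - (if b = j then 1 else 0) := by
  simp only [loadDiff, loadsOf, List.count_append, List.count_singleton, beq_iff_eq]
  push_cast
  ring

lemma abs_loadDiff_concat_le (init : Fin n → ℕ) (i j : Fin n) (l : List (Fin n)) (b : Fin n) :
    |loadDiff init i j (l ++ [b])| ≤ |loadDiff init i j l| + 1 := by
  rw [loadDiff_concat, add_sub_assoc]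
  refine (abs_add_le _ _).trans (add_le_add_right ?_ _)
  split_ifs <;> norm_num

variable {init : Fin n → ℕ} {g : ℤ} {i j : Fin n} {l : List (Fin n)}

lemma abs_loadDiff_lt (hl : l ∈ gapStaysBelow init g i j) : |loadDiff init i j l| < g :=
  hl l List.prefix_rfl

lemma mem_gapStaysBelow_of_concat {b : Fin n} (hl : l ++ [b] ∈ gapStaysBelow init g i j) :
    l ∈ gapStaysBelow init g i j :=
  fun k hk => hl k (hk.trans (List.prefix_append l [b]))

lemma sq_loadDiff_le (hl : |loadDiff init i j l| ≤ g) :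
    (loadDiff init i j l : ℝ) ^ 2 ≤ (g : ℝ) ^ 2 := by
  exact_mod_cast sq_le_sq' (abs_le.1 hl).1 (abs_le.1 hl).2

variable {q : (Fin n → ℕ) → PMF (Fin n)} {c : ℝ≥0}

lemma length_eq_of_mem_support_allocation {m : ℕ} (hl : l ∈ (allocation q init m).support) :
    l.length = m := by
  induction m generalizing l with
  | zero => simpa [allocation] using hl
  | succ m ih =>
    simp only [allocation, PMF.mem_support_bind_iff, PMF.mem_support_map_iff] at hl
    obtain ⟨k, hk, b, -, rfl⟩ := hl
    simp [ih hk]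

lemma sq_loadDiff_add_le_pexp (hmono : ∀ L, Monovary (q L) L) (hmin : ∀ L b, c ≤ q L b)
    (init : Fin n → ℕ) (hij : i ≠ j) (l : List (Fin n)) :
    (loadDiff init i j l : ℝ) ^ 2 + c ≤
      pexp (q (loadsOf n init l)) fun b => (loadDiff init i j (l ++ [b]) : ℝ) ^ 2 := by
  set L := loadsOf n init l with hL
  have hreal : Monovary (fun b => (q L b).toReal) fun b => (L b : ℝ) := fun a b hab =>
    ENNReal.toReal_mono ((q L).apply_ne_top b) (hmono L (Nat.cast_lt.1 hab))
  have hdrift : 0 ≤ ((q L i).toReal - (q L j).toReal) * (loadDiff init i j l : ℝ) := by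
    simpa [loadDiff, ← hL] using monovary_iff_forall_mul_nonneg.1 hreal j i
  have hi : (c : ℝ) ≤ (q L i).toReal := ENNReal.toReal_mono ((q L).apply_ne_top i) (hmin L i)
  have hj : 0 ≤ (q L j).toReal := ENNReal.toReal_nonneg
  simp only [loadDiff_concat]
  push_cast
  rw [pexp_sq_add_ite_sub_ite _ hij]
  linarith

lemma lexp_potential_concat_le (hmono : ∀ L, Monovary (q L) L) (hmin : ∀ L b, c ≤ q L b)
    (hij : i ≠ j) (hl : |loadDiff init i j l| < g) {t : ℝ} (ht : 0 ≤ t) :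
    lexp (q (loadsOf n init l)) (fun b =>
        ENNReal.ofReal ((g : ℝ) ^ 2 + (t + c) - (loadDiff init i j (l ++ [b]) : ℝ) ^ 2)) ≤
      ENNReal.ofReal ((g : ℝ) ^ 2 + t - (loadDiff init i j l : ℝ) ^ 2) := by
  have hnext (b : Fin n) : (loadDiff init i j (l ++ [b]) : ℝ) ^ 2 ≤ (g : ℝ) ^ 2 :=
    sq_loadDiff_le ((abs_loadDiff_concat_le init i j l b).trans (Int.add_one_le_iff.2 hl))
  rw [lexp_ofReal _ fun b => by linarith [hnext b, c.coe_nonneg], pexp_const_sub]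
  exact ENNReal.ofReal_le_ofReal (by linarith [sq_loadDiff_add_le_pexp hmono hmin init hij l])

lemma lexp_killed_potential_le (hmono : ∀ L, Monovary (q L) L) (hmin : ∀ L b, c ≤ q L b)
    (init : Fin n → ℕ) (g : ℤ) (hij : i ≠ j) (m : ℕ) :
    lexp (allocation q init m) ((gapStaysBelow init g i j).indicator fun l =>
        ENNReal.ofReal ((g : ℝ) ^ 2 + m * c - (loadDiff init i j l : ℝ) ^ 2)) ≤
      ENNReal.ofReal ((g : ℝ) ^ 2) := by
  induction m with
  | zero =>
    rw [allocation, lexp_pure]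
    refine (Set.indicator_le_self _ _ _).trans (ENNReal.ofReal_le_ofReal ?_)
    rw [Nat.cast_zero, zero_mul, add_zero]
    exact sub_le_self _ (sq_nonneg _)
  | succ m ih =>
    refine le_trans ?_ ih
    rw [allocation, lexp_bind]
    refine lexp_mono _ fun l => ?_
    rw [lexp_map]
    by_cases hl : l ∈ gapStaysBelow init g i j
    · rw [Set.indicator_of_mem hl]
      refine le_trans (lexp_mono _ fun b => ?_) (lexp_potential_concat_le hmono hmin hij
        (abs_loadDiff_lt hl) (mul_nonneg m.cast_nonneg c.coe_nonneg))
      refine (Set.indicator_le_self _ _ _).trans_eq ?_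
      rw [Nat.cast_succ, add_one_mul]
    · have hkilled (b : Fin n) : l ++ [b] ∉ gapStaysBelow init g i j :=
        fun hb => hl (mem_gapStaysBelow_of_concat hb)
      simp [lexp, hl, hkilled]

lemma prob_gapStaysBelow_le (hmono : ∀ L, Monovary (q L) L) (hmin : ∀ L b, c ≤ q L b)
    (hc : 0 < c) (init : Fin n → ℕ) (g : ℤ) (hij : i ≠ j) {m : ℕ} (hm : 0 < m) :
    prob (allocation q init m) (gapStaysBelow init g i j) ≤ (g : ℝ) ^ 2 / (m * c) := by
  have hmarkov : ENNReal.ofReal (m * c) *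
      (allocation q init m).toOuterMeasure (gapStaysBelow init g i j) ≤
        ENNReal.ofReal ((g : ℝ) ^ 2) := by
    rw [← lexp_indicator_one, ← lexp_const_mul]
    refine le_trans (lexp_mono _ fun l => ?_) (lexp_killed_potential_le hmono hmin init g hij m)
    by_cases hl : l ∈ gapStaysBelow init g i j
    · simp only [Set.indicator_of_mem hl, Pi.one_apply, mul_one]
      exact ENNReal.ofReal_le_ofReal (by linarith [sq_loadDiff_le (abs_loadDiff_lt hl).le])
    · simp [hl]
  have hreal := ENNReal.toReal_mono ENNReal.ofReal_ne_top hmarkov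
  rw [ENNReal.toReal_mul, ENNReal.toReal_ofReal (by positivity),
    ENNReal.toReal_ofReal (by positivity)] at hreal
  rwa [le_div_iff₀' (by positivity)]

lemma mem_gapStaysBelow_of_forall_take (h : ∀ s ≤ l.length, |loadDiff init i j (l.take s)| < g) :
    l ∈ gapStaysBelow init g i j := by
  intro k hk
  rw [List.prefix_iff_eq_take.1 hk]
  exact h _ hk.length_le

theorem one_sub_le_prob_forall_exists_le_gap (hmono : ∀ L, Monovary (q L) L)
    (hmin : ∀ L b, c ≤ q L b) (hc : 0 < c) (init : Fin n → ℕ) (g : ℤ) {m : ℕ} (hm : 0 < m) :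
    1 - (n : ℝ) ^ 2 * ((g : ℝ) ^ 2 / (m * c)) ≤ prob (allocation q init m)
      {l | ∀ i j, i ≠ j → ∃ s ≤ m, g ≤ |loadDiff init i j (l.take s)|} := by
  set pairs := (Finset.univ : Finset (Fin n)).offDiag
  refine le_trans (sub_le_sub_left ?_ 1) (one_sub_sum_prob_le_prob _ _ pairs
    (fun k => gapStaysBelow init g k.1 k.2) fun l hl => ?_)
  · have hcard : (pairs.card : ℝ) ≤ (n : ℝ) ^ 2 := by
      exact_mod_cast (Finset.card_le_univ pairs).trans_eq (by simp [sq])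
    calc ∑ k ∈ pairs, prob (allocation q init m) (gapStaysBelow init g k.1 k.2)
        ≤ pairs.card • ((g : ℝ) ^ 2 / (m * c)) := Finset.sum_le_card_nsmul _ _ _ fun k hk =>
          prob_gapStaysBelow_le hmono hmin hc init g (Finset.mem_offDiag.1 hk).2.2 hm
      _ ≤ (n : ℝ) ^ 2 * ((g : ℝ) ^ 2 / (m * c)) := by rw [nsmul_eq_mul]; gcongr
  · refine or_iff_not_imp_left.2 fun hgap => ?_
    simp only [Set.mem_ofPred_eq, not_forall, not_exists, not_and, not_le] at hgap
    obtain ⟨i, j, hij, hbelow⟩ := hgap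
    rw [← length_eq_of_mem_support_allocation hl] at hbelow
    exact Set.mem_biUnion (x := (i, j)) (by simpa [pairs] using hij)
      (mem_gapStaysBelow_of_forall_take hbelow)

end Allocation

section MaximalOptions

variable {κ α β : Type*} [Fintype κ] [DecidableEq α] [LinearOrder β] {L : α → β} {o : κ → α}

/-- The most-loaded bins among the options `o`, between which a step of UNFAIR breaks ties. -/
def maximalOptions (L : α → β) (o : κ → α) : Finset α :=
  (Finset.univ.image o).filter fun b => ∀ k, L (o k) ≤ L b

lemma mem_maximalOptions {b : α} :
    b ∈ maximalOptions L o ↔ (∃ k, o k = b) ∧ ∀ k, L (o k) ≤ L b := by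
  simp [maximalOptions]

lemma maximalOptions_const [Nonempty κ] (L : α → β) (b : α) :
    maximalOptions L (fun _ : κ => b) = {b} := by
  ext a
  simp only [mem_maximalOptions, exists_const, forall_const, Finset.mem_singleton]
  exact ⟨fun h => h.1.symm, by rintro rfl; exact ⟨rfl, le_rfl⟩⟩

variable {i j : α}

lemma le_of_swap_of_mem_maximalOptions (hij : L i ≤ L j) (hi : i ∈ maximalOptions L o) (k : κ) :
    L (Equiv.swap i j (o k)) ≤ L j := by
  have hmax := (mem_maximalOptions.1 hi).2 k
  rw [Equiv.swap_apply_def]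
  split_ifs
  · exact le_rfl
  · exact hij
  · exact hmax.trans hij

lemma mem_maximalOptions_swap_comp (hij : L i ≤ L j) (hi : i ∈ maximalOptions L o) :
    j ∈ maximalOptions L (Equiv.swap i j ∘ o) := by
  obtain ⟨k, hk⟩ := (mem_maximalOptions.1 hi).1
  exact mem_maximalOptions.2 ⟨⟨k, by simp [hk]⟩, le_of_swap_of_mem_maximalOptions hij hi⟩

lemma maximalOptions_swap_comp_subset (hij : L i ≤ L j) (hi : i ∈ maximalOptions L o) :
    maximalOptions L (Equiv.swap i j ∘ o) ⊆
      (maximalOptions L o).map (Equiv.swap i j).toEmbedding := by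
  intro b hb
  obtain ⟨⟨k, rfl⟩, hmax⟩ := mem_maximalOptions.1 hb
  have hj : L j ≤ L (Equiv.swap i j (o k)) := by
    obtain ⟨k', hk'⟩ := (mem_maximalOptions.1 (mem_maximalOptions_swap_comp hij hi)).1
    exact (congrArg L hk').ge.trans (hmax k')
  refine Finset.mem_map.2 ⟨o k, mem_maximalOptions.2 ⟨⟨k, rfl⟩, fun k' => ?_⟩, rfl⟩
  refine ((mem_maximalOptions.1 hi).2 k').trans ?_
  rw [Equiv.swap_apply_def] at hj
  split_ifs at hj with hki hkj
  · rw [hki]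
  · rwa [hkj]
  · exact hij.trans hj

lemma card_maximalOptions_swap_comp_le (hij : L i ≤ L j) (hi : i ∈ maximalOptions L o) :
    (maximalOptions L (Equiv.swap i j ∘ o)).card ≤ (maximalOptions L o).card :=
  (Finset.card_le_card (maximalOptions_swap_comp_subset hij hi)).trans_eq (Finset.card_map _)

end MaximalOptions

section UnfairStep

variable {n d : ℕ} (hn : 0 < n) (hd : 0 < d)

lemma stepBin_apply (L : Fin n → ℕ) (b : Fin n) :
    stepBin n d hn hd L b = ∑ o : Fin d → Fin n, ((n : ℝ≥0∞) ^ d)⁻¹ *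
      (if b ∈ maximalOptions L o then ((maximalOptions L o).card : ℝ≥0∞)⁻¹ else 0) := by
  have : NeZero n := ⟨hn.ne'⟩
  rw [stepBin, PMF.bind_apply, tsum_fintype]
  refine Finset.sum_congr rfl fun o _ => ?_
  rw [PMF.uniformOfFintype_apply, PMF.uniformOfFinset_apply, Fintype.card_fun, Fintype.card_fin,
    Fintype.card_fin, Nat.cast_pow]
  congr! <;> ext <;> simp [mem_maximalOptions]

-- Exchanging `i` and `j` in the options turns a draw that can choose `i` into one that can choose
-- the more loaded `j`, with no more ties.
lemma monovary_stepBin (L : Fin n → ℕ) : Monovary (stepBin n d hn hd L) L := by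
  intro i j hij
  rw [stepBin_apply, stepBin_apply,
    ← Equiv.sum_comp (Equiv.piCongrRight fun _ : Fin d => Equiv.swap i j)
      fun o => _ * if j ∈ maximalOptions L o then _ else _]
  refine Finset.sum_le_sum fun o _ => mul_le_mul_right ?_ _
  change _ ≤ if j ∈ maximalOptions L (Equiv.swap i j ∘ o) then
    ((maximalOptions L (Equiv.swap i j ∘ o)).card : ℝ≥0∞)⁻¹ else 0
  by_cases hi : i ∈ maximalOptions L o
  · rw [if_pos hi, if_pos (mem_maximalOptions_swap_comp hij.le hi), ENNReal.inv_le_inv]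
    exact_mod_cast card_maximalOptions_swap_comp_le hij.le hi
  · simp [hi]

lemma inv_pow_le_stepBin (L : Fin n → ℕ) (b : Fin n) :
    ((n : ℝ≥0∞) ^ d)⁻¹ ≤ stepBin n d hn hd L b := by
  have : NeZero d := ⟨hd.ne'⟩
  rw [stepBin_apply]
  refine le_trans ?_ (Finset.single_le_sum (fun _ _ => zero_le) (Finset.mem_univ fun _ => b))
  simp [maximalOptions_const]

lemma map_proc (init : Fin n → ℕ) (m : ℕ) :
    (proc n d hn hd init m).map (List.map Prod.fst) = allocation (stepBin n d hn hd) init m := by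
  induction m with
  | zero => simp [proc, allocation, PMF.pure_map]
  | succ m ih =>
    rw [allocation, ← ih, PMF.bind_map, proc, PMF.map_bind]
    simp [Function.comp_def, PMF.map]

end UnfairStep

lemma initialization_failure_bound {n : ℕ} (hn : 0 < n) (d : ℕ) :
    (n : ℝ) ^ (d + 2) * (((n : ℤ) ^ 2 : ℤ) : ℝ) ^ 2 / (n ^ (3 * d + 12) : ℕ) ≤
      1 / (n : ℝ) ^ (d + 1) := by
  have hn' : (1 : ℝ) ≤ n := by exact_mod_cast hn
  calc (n : ℝ) ^ (d + 2) * (((n : ℤ) ^ 2 : ℤ) : ℝ) ^ 2 / (n ^ (3 * d + 12) : ℕ)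
      = 1 / (n : ℝ) ^ (2 * d + 6) := by push_cast; field_simp; ring
    _ ≤ 1 / (n : ℝ) ^ (d + 1) :=
        one_div_le_one_div_of_le (by positivity) (pow_le_pow_right₀ hn' (by omega))

end Unfair

open Unfair in
theorem unfair_initialization_general {n d : ℕ} (hn : 0 < n) (hd : 0 < d) (init : Fin n → ℕ)
    (g : ℤ) {m : ℕ} (hm : 0 < m) :
    1 - (n : ℝ) ^ (d + 2) * (g : ℝ) ^ 2 / m ≤
      prob (proc n d hn hd init m)
        {h | ∀ i j : Fin n, i ≠ j → ∃ s : ℕ, s ≤ m ∧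
          g ≤ |(trajLoads n init h s i : ℤ) - (trajLoads n init h s j : ℤ)|} := by
  have hmin (L : Fin n → ℕ) (b : Fin n) :
      (((n : NNReal) ^ d)⁻¹ : NNReal) ≤ stepBin n d hn hd L b := by
    rw [ENNReal.coe_inv (by positivity)]
    exact_mod_cast inv_pow_le_stepBin hn hd L b
  have hbound := one_sub_le_prob_forall_exists_le_gap (monovary_stepBin hn hd) hmin
    (by positivity) init g hm
  rw [← map_proc, prob_map] at hbound
  refine Eq.trans_le ?_ hbound
  push_cast
  field_simp
  ring

open Unfair in
/-- **Lemma 1 (initialization).** For all integers `n ≥ 2`, `d ≥ 2`, after `n^(3d+12)`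
balls have been placed under UNFAIR (from empty bins), with probability at least
`1 − O(n^(−d−1))` every pair of distinct bins has, at some time `s ≤ n^(3d+12)`,
achieved a load gap of at least `n²`. -/
theorem unfair_initialization (d : ℕ) (hd2 : 2 ≤ d) :
    ∃ C : ℝ, 0 < C ∧
      ∀ n : ℕ, ∀ hn2 : 2 ≤ n,
        1 - C / (n : ℝ) ^ (d + 1) ≤
          prob (proc n d (by omega) (by omega) 0 (n ^ (3 * d + 12)))
            {h | ∀ i j : Fin n, i ≠ j → ∃ s : ℕ, s ≤ n ^ (3 * d + 12) ∧
              (n : ℤ) ^ 2 ≤ |(trajLoads n 0 h s i : ℤ) - (trajLoads n 0 h s j : ℤ)|} := by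
  refine ⟨1, one_pos, fun n hn2 => (sub_le_sub_left (initialization_failure_bound ?_ d) 1).trans
    (unfair_initialization_general _ _ 0 _ ?_)⟩ <;> positivity
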